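/- Let B, F ∈ ℝ with B ≠ 0 and fix (x₀,y₀) ∈ ℝ². Define S(t,x,y) = (F²/(4B²))t + (F/(2B))(y−y₀−(F/B)t) − (B/2)(x+x₀)(y−y₀−(F/B)t) + (B/4)cot(Bt)[(y−y₀−(F/B)t)² + (x−x₀)²]. Then on the open set {(t,x,y) : sin(Bt) ≠ 0}, S satisfies the Hamilton–Jacobi equation ∂_tS + (∂_xS)² + (∂_yS + Bx)² − Fx = 0. -/

import Mathlib

theorem Real.hasDerivAt_cot {u : ℝ} (hu : Real.sin u ≠ 0) :
    HasDerivAt Real.cot (-(1 + Real.cot u ^ 2)) u := by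
  have hcot : Real.cot = fun v => Real.cos v / Real.sin v := funext Real.cot_eq_cos_div_sin
  rw [hcot]
  refine ((Real.hasDerivAt_cos u).div (Real.hasDerivAt_sin u) hu).congr_deriv ?_
  field_simp
  ring

/-- The classical crossed-fields action `S(t,x,y)` (with fixed initial point `(x₀,y₀)`)
satisfies the Hamilton–Jacobi equation `∂ₜS + (∂ₓS)² + (∂_yS + Bx)² − Fx = 0` on the
open set `{(t,x,y) : sin(Bt) ≠ 0}`, for the classical Hamiltonian
`H(x,y,pₓ,p_y) = pₓ² + (p_y + Bx)² − Fx`. -/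
theorem stmt7 (B F x₀ y₀ : ℝ) (hB : B ≠ 0) :
    let S : ℝ → ℝ → ℝ → ℝ := fun t x y =>
      F^2/(4*B^2) * t + F/(2*B) * (y - y₀ - F/B*t)
      - B/2 * (x + x₀) * (y - y₀ - F/B*t)
      + B/4 * Real.cot (B*t) * ((y - y₀ - F/B*t)^2 + (x - x₀)^2)
    ∀ t x y : ℝ, Real.sin (B*t) ≠ 0 →
      deriv (fun τ => S τ x y) t
        + (deriv (fun ξ => S t ξ y) x)^2
        + (deriv (fun η => S t x η) y + B*x)^2
        - F*x = 0 := by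
  intro S t x y hsin
  have hlin : HasDerivAt (fun τ => y - y₀ - F/B*τ) (-(F/B)) t := by
    simpa using ((hasDerivAt_id t).const_mul (F/B)).const_sub (y - y₀)
  have hcot : HasDerivAt (fun τ => Real.cot (B*τ)) (-(1 + Real.cot (B*t) ^ 2) * B) t :=
    (Real.hasDerivAt_cot hsin).comp t (by simpa using (hasDerivAt_id t).const_mul B)
  have ht := ((((hasDerivAt_id t).const_mul (F^2/(4*B^2))).add (hlin.const_mul (F/(2*B)))).sub
    (hlin.const_mul (B/2 * (x + x₀)))).add
    ((hcot.const_mul (B/4)).mul ((hlin.pow 2).add_const ((x - x₀)^2)))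
  have hx := ((((hasDerivAt_id x).add_const x₀).const_mul (B/2)).mul_const
    (y - y₀ - F/B*t)).const_sub (F^2/(4*B^2) * t + F/(2*B) * (y - y₀ - F/B*t)) |>.add
    (((((hasDerivAt_id x).sub_const x₀).pow 2).const_add ((y - y₀ - F/B*t)^2)).const_mul
      (B/4 * Real.cot (B*t)))
  have hshift : HasDerivAt (fun η => η - y₀ - F/B*t) 1 y :=
    ((hasDerivAt_id y).sub_const y₀).sub_const (F/B*t)
  have hy := (((hshift.const_mul (F/(2*B))).const_add (F^2/(4*B^2) * t)).sub
    (hshift.const_mul (B/2 * (x + x₀)))).add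
    (((hshift.pow 2).add_const ((x - x₀)^2)).const_mul (B/4 * Real.cot (B*t)))
  have et : deriv (fun τ => S τ x y) t = _ := ht.deriv
  have ex : deriv (fun ξ => S t ξ y) x = _ := hx.deriv
  have ey : deriv (fun η => S t x η) y = _ := hy.deriv
  rw [et, ex, ey]
  simp only [id, Pi.pow_apply, Nat.reduceSub, pow_one]
  field_simp
  ring
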